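/- Let λ ≥ -1/2 be a real number and Δ ≥ 3. Let U be a unicyclic graph with n vertices and maximum degree Δ that has a vertex a of degree Δ not lying on its cycle. If a is adjacent to at least two vertices of degree greater than one, then there exists a unicyclic graph U' with n vertices and maximum degree Δ such that GRM_λ(U') < GRM_λ(U). -/

import Mathlib

/-!
The improved graph is obtained by moving edges: `swapEdge G x y z` replaces an edge `xy` by `zy`,
which keeps a connected graph connected and preserves the number of edges as soon as `z` is still
joined to `x` without `xy`. Since the index is half the quadratic form of the adjacency matrix
evaluated at the shifted degrees, the effect of a swap has a closed form (`GRM_swapEdge`).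

As `a` is on no cycle, every edge at `a` is a bridge. A unicyclic graph has a single cycle, so of
two non-leaf neighbours of `a` at least one, say `b`, has an acyclic branch
(`exists_acyclic_branch`); let `c` be the other one.

* If the branch at `b` contains a vertex of degree at least three, take a lowest such vertex `x`.
  The branches below it are paths, and moving one of them to the end of another one decreases the
  index (`improvable_of_fork`); this uses `-1/2 ≤ l`. The vertex `x` is found by induction on the
  size of branches (`improvable_or_leaf`).
* Otherwise the branch is a path `b, y, ..., z`. Cut it after `b` and insert `y, ..., z` into the
  edge `ac`, i.e. replace `ac` and `by` by `zc` and `ay`. The index changes by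
  `-(Δ - 2) * (deg c - 1)`, which is negative (`improvable_of_acyclic_branch`).

In both cases `a` keeps its degree `Δ` and the only vertex whose degree grows is a leaf, so the
maximum degree does not change.
-/

open SimpleGraph

/-- Degree of a vertex (classical decidability). -/
noncomputable def deg {V : Type*} [Fintype V] (G : SimpleGraph V) (v : V) : ℕ :=
  letI := Classical.decEq V
  letI : DecidableRel G.Adj := Classical.decRel _
  G.degree v

/-- Maximum degree of a graph (classical decidability). -/
noncomputable def maxDeg {V : Type*} [Fintype V] (G : SimpleGraph V) : ℕ :=
  letI := Classical.decEq V
  letI : DecidableRel G.Adj := Classical.decRel _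
  G.maxDegree

/-- The general reduced second Zagreb index
`GRM_λ(G) = Σ_{ab ∈ E(G)} (deg a + λ)(deg b + λ)`. -/
noncomputable def GRM {V : Type*} [Fintype V] (l : ℝ) (G : SimpleGraph V) : ℝ :=
  letI := Classical.decEq V
  letI : DecidableRel G.Adj := Classical.decRel _
  ∑ e ∈ G.edgeFinset,
    Sym2.lift ⟨fun a b => ((G.degree a : ℝ) + l) * ((G.degree b : ℝ) + l),
      fun a b => by ring⟩ e

/-- A unicyclic graph: connected with exactly as many edges as vertices. -/
def IsUnicyclic {V : Type*} [Fintype V] (G : SimpleGraph V) : Prop :=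
  G.Connected ∧ G.edgeSet.ncard = Fintype.card V

/-- A vertex lies on a cycle of `G`. -/
def OnCycle {V : Type*} (G : SimpleGraph V) (v : V) : Prop :=
  ∃ (u : V) (w : G.Walk u u), w.IsCycle ∧ v ∈ w.support

/-! ### The index as a quadratic form in the adjacency matrix -/

/-- Real adjacency indicator of `G`. -/
noncomputable def adjInd {V : Type*} (G : SimpleGraph V) (u v : V) : ℝ :=
  open Classical in if G.Adj u v then 1 else 0

/-- The sum of the shifted degrees `deg v + l` over the neighbours `v` of `u`. -/
noncomputable def nbrSum {V : Type*} [Fintype V] (l : ℝ) (G : SimpleGraph V) (u : V) : ℝ :=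
  ∑ v, adjInd G u v * (deg G v + l)

/-- The graph obtained from `G` by replacing the edge `xy` with the edge `zy`. -/
def swapEdge {V : Type*} (G : SimpleGraph V) (x y z : V) : SimpleGraph V :=
  G.deleteEdges {s(x, y)} ⊔ SimpleGraph.edge z y

section Algebra
variable {V : Type*}

lemma adjInd_symm (G : SimpleGraph V) (u v : V) : adjInd G u v = adjInd G v u := by
  by_cases h : G.Adj u v
  · have h' := h.symm
    simp [adjInd, h, h']
  · have h' : ¬ G.Adj v u := fun h' => h h'.symm
    simp [adjInd, h, h']

lemma adjInd_self (G : SimpleGraph V) (u : V) : adjInd G u u = 0 := by simp [adjInd]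

lemma adjInd_of_adj {G : SimpleGraph V} {u v : V} (h : G.Adj u v) : adjInd G u v = 1 := by
  simp [adjInd, h]

lemma adjInd_of_not_adj {G : SimpleGraph V} {u v : V} (h : ¬ G.Adj u v) : adjInd G u v = 0 := by
  simp [adjInd, h]

lemma adjInd_nonneg (G : SimpleGraph V) (u v : V) : 0 ≤ adjInd G u v := by
  unfold adjInd; split_ifs <;> norm_num

open Classical in
lemma adjInd_swapEdge {G : SimpleGraph V} {x y z : V} (hxy : G.Adj x y) (hzy : z ≠ y)
    (hn : ¬ G.Adj z y) (u v : V) :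
    adjInd (swapEdge G x y z) u v = adjInd G u v
      - (if u = x then 1 else 0) * (if v = y then 1 else 0)
      - (if u = y then 1 else 0) * (if v = x then 1 else 0)
      + (if u = z then 1 else 0) * (if v = y then 1 else 0)
      + (if u = y then 1 else 0) * (if v = z then 1 else 0) := by
  have hxz : x ≠ z := by rintro rfl; exact hn hxy
  have hxy' := hxy.ne
  have hn' : ¬ G.Adj y z := fun h => hn h.symm
  have hyx := hxy.symm
  simp only [adjInd, swapEdge, sup_adj, deleteEdges_adj, Set.mem_singleton_iff, edge_adj,
    Sym2.eq_iff]
  by_cases h1 : u = x <;> by_cases h2 : u = y <;> by_cases h3 : u = z <;>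
  by_cases h4 : v = x <;> by_cases h5 : v = y <;> by_cases h6 : v = z <;>
  simp_all

variable [Fintype V]

lemma deg_eq_sum (G : SimpleGraph V) (u : V) : (deg G u : ℝ) = ∑ v, adjInd G u v := by
  classical
  simp only [deg, adjInd]
  rw [Finset.sum_boole, ← card_neighborFinset_eq_degree]
  congr 2
  ext v; simp

lemma deg_eq_ncard (G : SimpleGraph V) (u : V) : deg G u = {v | G.Adj u v}.ncard := by
  classical
  unfold deg
  rw [← card_neighborFinset_eq_degree, Set.ncard_eq_toFinset_card']
  congr 1

lemma maxDeg_eq_iff (G : SimpleGraph V) {D : ℕ} (a : V) (ha : deg G a = D)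
    (h : ∀ v, deg G v ≤ D) : maxDeg G = D := by
  classical
  apply le_antisymm
  · exact maxDegree_le_of_forall_degree_le _ _ h
  · rw [← ha]; exact degree_le_maxDegree _ _

lemma deg_le_maxDeg (G : SimpleGraph V) (v : V) : deg G v ≤ maxDeg G := by
  classical
  exact degree_le_maxDegree _ _

/-- Each edge is counted twice in the quadratic form of the adjacency matrix. -/
lemma two_mul_GRM (l : ℝ) (G : SimpleGraph V) :
    2 * GRM l G = ∑ u, ∑ v, adjInd G u v * (deg G u + l) * (deg G v + l) := by
  classical
  let F : Sym2 V → ℝ := Sym2.lift ⟨fun a b => ((deg G a : ℝ) + l) * ((deg G b : ℝ) + l),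
      fun a b => by ring⟩
  have h1 : ∑ d : G.Dart, F d.edge = 2 * GRM l G := by
    rw [← Finset.sum_fiberwise_of_maps_to (t := G.edgeFinset) (g := fun d : G.Dart => d.edge)
      (fun d _ => by rw [mem_edgeFinset]; exact d.edge_mem)]
    have : 2 * GRM l G = ∑ e ∈ G.edgeFinset, 2 * F e := by
      rw [← Finset.mul_sum]
      simp only [GRM, F, deg]
    rw [this]
    refine Finset.sum_congr rfl fun e he => ?_
    rw [Finset.sum_congr rfl (g := fun _ => F e) (fun d hd => by
      rw [(Finset.mem_filter.1 hd).2])]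
    rw [Finset.sum_const, G.dart_edge_fiber_card e (by simpa using he)]
    simp
  rw [← h1, ← Finset.sum_product', ← Finset.sum_filter_of_ne (p := fun q : V × V => G.Adj q.1 q.2)]
  · refine Finset.sum_bij' (fun d _ => (d.fst, d.snd))
      (fun q h => (⟨q, (Finset.mem_filter.1 h).2⟩ : G.Dart)) ?_ ?_ ?_ ?_ ?_ <;> try simp
    intro d
    have : F d.edge = ((deg G d.fst : ℝ) + l) * ((deg G d.snd : ℝ) + l) := rfl
    simp [adjInd, d.adj, this]
  · intro q _ hq
    by_contra h
    exact hq (by simp [adjInd, h])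

open Classical in
lemma deg_swapEdge {G : SimpleGraph V} {x y z : V} (hxy : G.Adj x y) (hzy : z ≠ y)
    (hn : ¬ G.Adj z y) (u : V) :
    (deg (swapEdge G x y z) u : ℝ) =
      deg G u - (if u = x then 1 else 0) + (if u = z then 1 else 0) := by
  simp only [deg_eq_sum, adjInd_swapEdge hxy hzy hn, Finset.sum_add_distrib,
    Finset.sum_sub_distrib, ← Finset.mul_sum, Finset.sum_ite_eq', Finset.mem_univ, if_true]
  ring

/-- Replacing `xy` by `zy` changes the index by the linear terms at `x`, `y`, `z`, with a
correction when `x` and `z` are adjacent. -/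
lemma GRM_swapEdge (l : ℝ) {G : SimpleGraph V} {x y z : V} (hxy : G.Adj x y) (hzy : z ≠ y)
    (hn : ¬ G.Adj z y) :
    GRM l (swapEdge G x y z) = GRM l G + (deg G y + l) * (deg G z + 2 - deg G x)
      - nbrSum l G x + nbrSum l G z - adjInd G x z := by
  classical
  have hxz : x ≠ z := by rintro rfl; exact hn hxy
  have h := two_mul_GRM l (swapEdge G x y z)
  have h0 := two_mul_GRM l G
  set f : V → ℝ := fun v => (deg G v : ℝ) + l with hf
  have key : ∑ u, ∑ v, adjInd (swapEdge G x y z) u v * (deg (swapEdge G x y z) u + l)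
      * (deg (swapEdge G x y z) v + l) =
      ∑ u, ∑ v, (adjInd G u v * f u * f v
        - (if u = x then 1 else 0) * (adjInd G u v * f v)
        - (if v = x then 1 else 0) * (adjInd G v u * f u)
        + (if u = z then 1 else 0) * (adjInd G u v * f v)
        + (if v = z then 1 else 0) * (adjInd G v u * f u)
        + (if u = x then 1 else 0) * ((if v = x then 1 else 0) * (adjInd G u v))
        + (if u = z then 1 else 0) * ((if v = z then 1 else 0) * (adjInd G u v))
        - (if u = x then 1 else 0) * ((if v = z then 1 else 0) * (adjInd G u v))
        - (if u = z then 1 else 0) * ((if v = x then 1 else 0) * (adjInd G u v))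
        - (if u = x then 1 else 0) * ((if v = y then 1 else 0) * ((f x - 1) * f y))
        - (if u = y then 1 else 0) * ((if v = x then 1 else 0) * ((f x - 1) * f y))
        + (if u = z then 1 else 0) * ((if v = y then 1 else 0) * ((f z + 1) * f y))
        + (if u = y then 1 else 0) * ((if v = z then 1 else 0) * ((f z + 1) * f y))) := by
    refine Finset.sum_congr rfl fun u _ => Finset.sum_congr rfl fun v _ => ?_
    rw [adjInd_swapEdge hxy hzy hn, deg_swapEdge hxy hzy hn, deg_swapEdge hxy hzy hn,
      adjInd_symm G v u]
    have hxy' := hxy.ne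
    by_cases h1 : u = x <;> by_cases h2 : u = y <;> by_cases h3 : u = z <;>
    by_cases h4 : v = x <;> by_cases h5 : v = y <;> by_cases h6 : v = z <;>
    simp_all <;> ring
  rw [key] at h
  have hS : ∀ w, ∑ v, adjInd G w v * f v = nbrSum l G w := fun w => rfl
  simp only [Finset.sum_add_distrib, Finset.sum_sub_distrib, ite_mul, one_mul,
    zero_mul, Finset.sum_ite_eq', Finset.mem_univ, if_true, hS] at h
  simp only [Finset.sum_ite_irrel, Finset.sum_const_zero, Finset.sum_ite_eq', Finset.mem_univ,
    if_true, hS] at h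
  rw [adjInd_symm G z x, adjInd_self, adjInd_self] at h
  simp only [hf] at h
  linarith

lemma nbrSum_swapEdge (l : ℝ) {G : SimpleGraph V} {x y z : V} (hxy : G.Adj x y) (hzy : z ≠ y)
    (hn : ¬ G.Adj z y) {u : V} (huy : u ≠ y) (huz : u ≠ z) [Decidable (u = x)] :
    nbrSum l (swapEdge G x y z) u = nbrSum l G u - adjInd G u x + adjInd G u z
      - if u = x then (deg G y + l) else 0 := by
  classical
  have hxy' := hxy.ne
  unfold nbrSum
  have key : ∀ v, adjInd (swapEdge G x y z) u v * (deg (swapEdge G x y z) v + l) =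
      adjInd G u v * (deg G v + l) - (if v = x then adjInd G u v else 0)
       + (if v = z then adjInd G u v else 0)
       - (if v = y then (if u = x then (deg G v + l) else 0) else 0) := by
    intro v
    rw [adjInd_swapEdge hxy hzy hn, deg_swapEdge hxy hzy hn]
    by_cases h1 : u = x <;>
    by_cases h4 : v = x <;> by_cases h5 : v = y <;> by_cases h6 : v = z <;>
    simp_all <;> ring
  simp only [key, Finset.sum_add_distrib, Finset.sum_sub_distrib, Finset.sum_ite_eq',
    Finset.mem_univ, if_true]

lemma nbrSum_of_deg_one (l : ℝ) {G : SimpleGraph V} {z t : V} (hz : deg G z = 1)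
    (hzt : G.Adj z t) : nbrSum l G z = deg G t + l := by
  have h : ∑ v, adjInd G z v * ((deg G v + l) - (deg G t + l)) = 0 := by
    refine Finset.sum_eq_zero fun v _ => ?_
    by_cases hv : G.Adj z v
    · rw [deg_eq_ncard, Set.ncard_eq_one] at hz
      obtain ⟨s, hs⟩ := hz
      have h1 : v = s := by simpa using hs.le (show v ∈ {v | G.Adj z v} from hv)
      have h2 : t = s := by simpa using hs.le (show t ∈ {v | G.Adj z v} from hzt)
      simp [h1, h2]
    · simp [adjInd, hv]
  simp only [mul_sub, Finset.sum_sub_distrib, ← Finset.sum_mul, ← deg_eq_sum, hz] at h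
  unfold nbrSum
  push_cast at h
  linarith

lemma nbrSum_of_deg_two (l : ℝ) {G : SimpleGraph V} {b p q : V} (hpq : p ≠ q) (hb : deg G b = 2)
    (hp : G.Adj b p) (hq : G.Adj b q) :
    nbrSum l G b = (deg G p + l) + (deg G q + l) := by
  classical
  have hs : ({p, q} : Set V) = {v | G.Adj b v} := by
    apply Set.eq_of_subset_of_ncard_le
    · rintro v (rfl | rfl) <;> assumption
    · rw [← deg_eq_ncard, hb, Set.ncard_pair hpq]
    · exact Set.toFinite _
  have h1 : ∀ v, G.Adj b v → v = p ∨ v = q := fun v hv => by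
    have : v ∈ ({p, q} : Set V) := by rw [hs]; exact hv
    simpa using this
  unfold nbrSum
  rw [← Finset.sum_subset (Finset.subset_univ {p, q}), Finset.sum_pair hpq, adjInd_of_adj hp,
    adjInd_of_adj hq]
  · ring
  · intro v _ hv
    rw [adjInd_of_not_adj, zero_mul]
    intro h
    rcases h1 v h with rfl | rfl <;> simp at hv

lemma deg_pos_of_adj {G : SimpleGraph V} {u v : V} (h : G.Adj u v) : 1 ≤ deg G u := by
  rw [deg_eq_ncard, Nat.one_le_iff_ne_zero]
  exact Set.ncard_ne_zero_of_mem (a := v) h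

/-- Every neighbour contributes at least `1 + l`. -/
lemma le_nbrSum (l : ℝ) {G : SimpleGraph V} {x p q r : V} (hpq : p ≠ q) (hpr : p ≠ r) (hqr : q ≠ r)
    (hp : G.Adj x p) (hq : G.Adj x q) (hr : G.Adj x r) :
    (deg G p + l) + (deg G q + l) + (deg G r + l) + ((deg G x : ℝ) - 3) * (1 + l)
      ≤ nbrSum l G x := by
  classical
  have h := Finset.sum_le_univ_sum_of_nonneg (s := {p, q, r})
    (f := fun v => adjInd G x v * ((deg G v + l) - (1 + l))) (fun v => by
      by_cases hv : G.Adj x v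
      · have : (1 : ℝ) ≤ deg G v := by exact_mod_cast deg_pos_of_adj hv.symm
        exact mul_nonneg (adjInd_nonneg _ _ _) (by linarith)
      · simp [adjInd, hv])
  rw [Finset.sum_insert (by simp [hpq, hpr]), Finset.sum_pair hqr, adjInd_of_adj hp,
    adjInd_of_adj hq, adjInd_of_adj hr] at h
  simp only [mul_sub (adjInd G x _), Finset.sum_sub_distrib, ← Finset.sum_mul, ← deg_eq_sum] at h
  unfold nbrSum
  linarith

end Algebra

/-! ### Branches at bridges and connectivity of edge swaps -/

/-- The branch hanging from `p` at `x`: the vertices reachable from `x` once the edge `px` is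
deleted. -/
def branch {V : Type*} (G : SimpleGraph V) (p x : V) : Set V :=
  {v | (G.deleteEdges {s(p, x)}).Reachable x v}

section Branch
variable {V : Type*} {G : SimpleGraph V}

lemma self_mem_branch (p x : V) : x ∈ branch G p x := Reachable.refl x

lemma branch_closed {p x v w : V} (hv : v ∈ branch G p x) (h : G.Adj v w)
    (hne : s(v, w) ≠ s(p, x)) : w ∈ branch G p x :=
  Reachable.trans hv (Adj.reachable (by simpa [deleteEdges_adj] using ⟨h, by simpa using hne⟩))

lemma branch_closed' {p x v w : V} (hv : v ∈ branch G p x) (h : G.Adj v w)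
    (hvp : v ≠ p) (hwp : w ≠ p) : w ∈ branch G p x :=
  branch_closed hv h (by intro h; rw [Sym2.eq_iff] at h; tauto)

/-- A walk avoiding `p` cannot leave the branch at `p`. -/
lemma branch_walk {p x v w : V} (W : G.Walk v w) (hp : p ∉ W.support) (hv : v ∈ branch G p x) :
    w ∈ branch G p x := by
  induction W with
  | nil => exact hv
  | cons h W ih =>
    simp only [Walk.support_cons, List.mem_cons, not_or] at hp
    refine ih hp.2 (branch_closed' hv h (Ne.symm hp.1) ?_)
    rintro rfl
    exact hp.2 W.start_mem_support

/-- Vertices of a branch stay joined to its root after deleting an edge `uw` with `u` outside the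
branch. -/
lemma branch_reach {p x u v : V} (hv : v ∈ branch G p x) (hu : u ∉ branch G p x) (w : V) :
    (G.deleteEdges {s(u, w)}).Reachable x v := by
  have hv' := (reachable_iff_reflTransGen _ _).1 hv
  induction hv' with
  | refl => exact Reachable.refl _
  | @tail c d hc hcd ih =>
    have hc' : c ∈ branch G p x := (reachable_iff_reflTransGen _ _).2 hc
    refine (ih hc').trans (Adj.reachable ?_)
    rw [deleteEdges_adj] at hcd ⊢
    refine ⟨hcd.1, ?_⟩
    intro h
    rw [Set.mem_singleton_iff, Sym2.eq_iff] at h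
    rcases h with ⟨rfl, rfl⟩ | ⟨rfl, rfl⟩
    · exact hu hc'
    · exact hu hv

lemma notMem_branch_of_isBridge {p x : V} (h : G.IsBridge s(p, x)) : p ∉ branch G p x :=
  fun hp => (isBridge_iff.1 h) (Reachable.symm hp)

lemma branch_subset {p x y : V} (hxy : G.Adj x y) (hyp : y ≠ p)
    (hb : G.IsBridge s(x, y)) : branch G x y ⊆ branch G p x := by
  intro v hv
  have h1 := branch_reach hv (notMem_branch_of_isBridge hb) p
  rw [Sym2.eq_swap] at h1
  refine Reachable.trans (Adj.reachable ?_) h1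
  rw [deleteEdges_adj]
  refine ⟨hxy, ?_⟩
  rw [Set.mem_singleton_iff, Sym2.eq_iff]
  rintro (⟨rfl, rfl⟩ | ⟨_, h⟩)
  · exact hxy.ne rfl
  · exact hyp h

/-- Two distinct neighbours of `p` lie in different branches when both edges are bridges. -/
lemma neighbor_notMem_branch {p x y : V} (hpy : G.Adj p y) (hxy : x ≠ y)
    (hb : G.IsBridge s(p, x)) : y ∉ branch G p x := fun hy =>
  notMem_branch_of_isBridge hb (branch_closed hy hpy.symm (by
    intro h
    rw [Sym2.eq_iff] at h
    rcases h with ⟨_, rfl⟩ | ⟨rfl, _⟩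
    · exact hb (by simp)
    · exact hxy rfl))

lemma not_adj_of_notMem_branch {p x v w : V} (hv : v ∈ branch G p x) (hw : w ∉ branch G p x)
    (hwp : w ≠ p) : ¬ G.Adj v w := fun h => hw (branch_closed hv h (by
  rw [ne_eq, Sym2.eq_iff]
  rintro (⟨_, rfl⟩ | ⟨_, rfl⟩)
  · exact hw (self_mem_branch _ _)
  · exact hwp rfl))

lemma swapEdge_adj {x y z : V} (hzy : z ≠ y) : (swapEdge G x y z).Adj z y := by
  simp [swapEdge, edge_adj, hzy]

lemma swapEdge_connected (hG : G.Connected) {x y z : V} (hzy : z ≠ y)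
    (hz : (G.deleteEdges {s(x, y)}).Reachable x z) : (swapEdge G x y z).Connected := by
  have hle : G.deleteEdges {s(x, y)} ≤ swapEdge G x y z := le_sup_left
  have hxy : (swapEdge G x y z).Reachable x y := (hz.mono hle).trans (swapEdge_adj hzy).reachable
  refine (connected_iff_exists_forall_reachable _).2 ⟨x, fun v => ?_⟩
  have hv := (reachable_iff_reflTransGen _ _).1 (hG.preconnected x v)
  induction hv with
  | refl => exact Reachable.refl _
  | @tail c d _ hcd ih =>
    by_cases h : s(c, d) = s(x, y)
    · rw [Sym2.eq_iff] at h
      rcases h with ⟨rfl, rfl⟩ | ⟨rfl, rfl⟩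
      · exact hxy
      · exact Reachable.refl _
    · exact ih.trans (Adj.reachable (hle (by simpa [deleteEdges_adj] using ⟨hcd, by simpa using h⟩)))

lemma swapEdge_isUnicyclic [Fintype V] (hG : IsUnicyclic G) {x y z : V} (hxy : G.Adj x y)
    (hzy : z ≠ y) (hn : ¬ G.Adj z y)
    (hz : (G.deleteEdges {s(x, y)}).Reachable x z) : IsUnicyclic (swapEdge G x y z) := by
  refine ⟨swapEdge_connected hG.1 hzy hz, ?_⟩
  have h : (swapEdge G x y z).edgeSet = insert s(z, y) (G.edgeSet \ {s(x, y)}) := by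
    rw [swapEdge, edgeSet_sup, edgeSet_deleteEdges, edgeSet_edge_of_ne hzy, Set.union_singleton]
  rw [h, Set.ncard_insert_of_notMem (by simp [hn]),
    Set.ncard_sdiff_singleton_add_one (by simpa using hxy), hG.2]

/-- A connected graph with as many edges as vertices has only one cycle: deleting a non-bridge
turns every remaining edge into a bridge. -/
lemma isBridge_of_not_isBridge [Fintype V] (hG : IsUnicyclic G) {v w v' w' : V} (h : G.Adj v w)
    (hb : ¬ G.IsBridge s(v, w)) (h' : G.Adj v' w') (hne : s(v', w') ≠ s(v, w)) :
    (G.deleteEdges {s(v, w)}).IsBridge s(v', w') := by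
  by_contra hb'
  have h1 := ((hG.1.connected_delete_edge_of_not_isBridge hb).connected_delete_edge_of_not_isBridge
    hb').card_vert_le_card_edgeSet_add_one
  rw [edgeSet_deleteEdges, edgeSet_deleteEdges, Nat.card_coe_set_eq, Nat.card_eq_fintype_card,
    ← hG.2] at h1
  have h2 := Set.ncard_sdiff_singleton_add_one (s := G.edgeSet) (a := s(v, w)) (by simpa using h)
  have h3 := Set.ncard_sdiff_singleton_add_one (s := G.edgeSet \ {s(v, w)}) (a := s(v', w'))
    ⟨by simpa using h', by simpa using hne⟩
  omega

/-- If `a` lies on no cycle, then among the branches at two of its neighbours at least one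
contains no cycle, i.e. all edges meeting it are bridges. -/
lemma exists_acyclic_branch [Fintype V] (hG : IsUnicyclic G) {a b c : V} (hab : G.Adj a b)
    (hac : G.Adj a c) (hbc : b ≠ c) (ha : ¬ OnCycle G a) :
    (∀ v ∈ branch G a b, ∀ w, G.Adj v w → G.IsBridge s(v, w)) ∨
    (∀ v ∈ branch G a c, ∀ w, G.Adj v w → G.IsBridge s(v, w)) := by
  classical
  by_contra! hcon
  obtain ⟨⟨v, hv, w, hvw, hb⟩, v', hv', w', hvw', hb'⟩ := hcon
  have habr : G.IsBridge s(a, b) := by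
    rw [isBridge_iff_forall_cycle_notMem (by simpa using hab)]
    intro u p hp he
    exact ha ⟨u, p, hp, p.fst_mem_support_of_mem_edges he⟩
  have hacr : G.IsBridge s(a, c) := by
    rw [isBridge_iff_forall_cycle_notMem (by simpa using hac)]
    intro u p hp he
    exact ha ⟨u, p, hp, p.fst_mem_support_of_mem_edges he⟩
  -- A closed walk missing `a` meets only one of the two branches.
  have hdisj : ∀ (u : V) (p : G.Walk u u), p.IsCycle → v ∈ p.support → v' ∈ p.support → False := by
    intro u p hp h1 h2
    have hpa : a ∉ p.support := fun h => ha ⟨u, p, hp, h⟩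
    have huB : u ∈ branch G a b := by
      refine branch_walk (p.dropUntil v h1) (fun h => hpa (p.support_dropUntil_subset_support h1 h)) hv
    have huC : u ∈ branch G a c := by
      refine branch_walk (p.dropUntil v' h2) (fun h => hpa (p.support_dropUntil_subset_support h2 h)) hv'
    have h3 := branch_reach huC (notMem_branch_of_isBridge hacr) b
    exact neighbor_notMem_branch hac hbc habr (Reachable.trans huB h3.symm)
  rw [isBridge_iff_forall_cycle_notMem (by simpa using hvw')] at hb'
  push Not at hb'
  obtain ⟨u, p, hp, he⟩ := hb'
  have hv'p := p.fst_mem_support_of_mem_edges he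
  have he2 : s(v, w) ∉ p.edges := fun h =>
    hdisj u p hp (p.fst_mem_support_of_mem_edges h) hv'p
  have hne : s(v', w') ≠ s(v, w) := fun h => he2 (h ▸ he)
  have hbr := isBridge_of_not_isBridge hG hvw hb hvw' hne
  refine hbr.notMem_edges_of_isCycle (hp.toDeleteEdges (G := G) {s(v, w)} (by
    intro e h1 h2; rw [Set.mem_singleton_iff] at h2; exact he2 (h2 ▸ h1))) ?_
  simpa [Walk.edges_transfer] using he

end Branch

/-! ### Reducing the index -/

/-- Some unicyclic graph on the same vertices has maximum degree `D` and a smaller index. -/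
def Improvable {V : Type*} [Fintype V] (l : ℝ) (U : SimpleGraph V) (D : ℕ) : Prop :=
  ∃ U' : SimpleGraph V, IsUnicyclic U' ∧ maxDeg U' = D ∧ GRM l U' < GRM l U

section Reduce
variable {V : Type*} [Fintype V] {U : SimpleGraph V}

/-- If `x` has degree at least three, then moving one of the subtrees at `x` to the end `z` of
another branch `y₁` decreases the index, provided the neighbour `t` of `z` is `x` or has
degree two. The bound `-1/2 ≤ l` matters when `z` is adjacent to `x`. -/
lemma improvable_of_fork {l : ℝ} (hl : -1/2 ≤ l) {D : ℕ} (hD : 3 ≤ D) (hU : IsUnicyclic U)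
    {a : V} (ha : deg U a = D) (hmax : ∀ v, deg U v ≤ D)
    {x p y₁ y₂ z t : V} (hx : 3 ≤ deg U x) (hxa : x ≠ a) (hp : U.Adj x p) (h1 : U.Adj x y₁)
    (h2 : U.Adj x y₂) (hp1 : y₁ ≠ p) (hp2 : y₂ ≠ p) (h12 : y₁ ≠ y₂) (hpdeg : 2 ≤ deg U p)
    (hb : U.IsBridge s(x, y₁)) (hz : z ∈ branch U x y₁) (hza : z ≠ a) (hzdeg : deg U z = 1)
    (hzt : U.Adj z t) (ht : (z = y₁ ∧ t = x) ∨ deg U t = 2) : Improvable l U D := by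
  classical
  have hxb := notMem_branch_of_isBridge hb
  have hy2 : y₂ ∉ branch U x y₁ := neighbor_notMem_branch h2 h12 hb
  have hzy : z ≠ y₂ := by rintro rfl; exact hy2 hz
  have hn : ¬ U.Adj z y₂ := not_adj_of_notMem_branch hz hy2 h2.ne'
  have hreach : (U.deleteEdges {s(x, y₂)}).Reachable x z := by
    refine Reachable.trans (Adj.reachable ?_) (branch_reach hz hxb y₂)
    rw [deleteEdges_adj]
    refine ⟨h1, ?_⟩
    rw [Set.mem_singleton_iff, Sym2.eq_iff]
    rintro (⟨_, h⟩ | ⟨h, _⟩)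
    · exact h12 h
    · exact h2.ne h
  have hdeg := deg_swapEdge h2 hzy hn
  refine ⟨swapEdge U x y₂ z, swapEdge_isUnicyclic hU h2 hzy hn hreach, maxDeg_eq_iff _ a ?_ ?_, ?_⟩
  · have := hdeg a
    rw [if_neg hxa.symm, if_neg hza.symm, ha] at this
    simp only [sub_zero, add_zero] at this
    exact_mod_cast this
  · intro v
    have h := hdeg v
    have hv : (deg U v : ℝ) ≤ D := by exact_mod_cast hmax v
    have hD' : (3 : ℝ) ≤ D := by exact_mod_cast hD
    suffices (deg (swapEdge U x y₂ z) v : ℝ) ≤ D by exact_mod_cast this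
    rw [h]
    by_cases hvz : v = z
    · subst hvz
      rw [hzdeg]
      split_ifs <;> push_cast <;> linarith
    · rw [if_neg hvz]
      split_ifs <;> linarith
  · rw [GRM_swapEdge l h2 hzy hn, nbrSum_of_deg_one l hzdeg hzt, hzdeg]
    have hS := le_nbrSum l (Ne.symm hp1) (Ne.symm hp2) h12 hp h1 h2
    have hx' : (3 : ℝ) ≤ deg U x := by exact_mod_cast hx
    have hp' : (2 : ℝ) ≤ deg U p := by exact_mod_cast hpdeg
    have h1' : (1 : ℝ) ≤ deg U y₁ := by exact_mod_cast deg_pos_of_adj h1.symm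
    have h2' : (1 : ℝ) ≤ deg U y₂ := by exact_mod_cast deg_pos_of_adj h2.symm
    have m1 : 0 ≤ ((deg U x : ℝ) - 3) * ((deg U y₂ : ℝ) - 1) :=
      mul_nonneg (by linarith) (by linarith)
    have m2 : 0 ≤ ((deg U x : ℝ) - 3) * (l + 1/2) :=
      mul_nonneg (by linarith) (by linarith)
    push_cast
    rcases ht with ⟨rfl, rfl⟩ | ht
    · rw [adjInd_of_adj h1]
      nlinarith
    · have := adjInd_nonneg U x z
      rw [ht]
      push_cast
      nlinarith

lemma exists_other_neighbor {x p : V} (hx : 2 ≤ deg U x) : ∃ y, U.Adj x y ∧ y ≠ p := by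
  rw [deg_eq_ncard] at hx
  obtain ⟨y, hy, hyp⟩ := Set.exists_ne_of_one_lt_ncard hx p
  exact ⟨y, hy, hyp⟩

/-- In an acyclic branch either some vertex of degree at least three allows an improvement, or the
root `x` has degree at most two and the branch contains a leaf `z` whose neighbour is the parent
of `x` (when `z = x`) or has degree two. -/
lemma improvable_or_leaf {l : ℝ} (hl : -1/2 ≤ l) {D : ℕ} (hD : 3 ≤ D) (hU : IsUnicyclic U)
    {a : V} (ha : deg U a = D) (hmax : ∀ v, deg U v ≤ D) (k : ℕ) :
    ∀ p x : V, U.Adj p x → 2 ≤ deg U p →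
      (∀ v ∈ branch U p x, ∀ w, U.Adj v w → U.IsBridge s(v, w)) → a ∉ branch U p x →
      (branch U p x).ncard ≤ k →
      Improvable l U D ∨ (deg U x ≤ 2 ∧ ∃ z ∈ branch U p x, ∃ t, U.Adj z t ∧ deg U z = 1 ∧
        ((z = x ∧ t = p) ∨ deg U t = 2)) := by
  induction k with
  | zero =>
    intro p x _ _ _ _ hk
    have := Set.ncard_ne_zero_of_mem (self_mem_branch (G := U) p x)
    omega
  | succ k ih =>
    intro p x hpx hp hbr hab hk
    have hxm := self_mem_branch (G := U) p x
    have hstep : ∀ y, U.Adj x y → y ≠ p → 2 ≤ deg U x → branch U x y ⊆ branch U p x ∧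
        (Improvable l U D ∨ (deg U y ≤ 2 ∧ ∃ z ∈ branch U x y, ∃ t, U.Adj z t ∧ deg U z = 1 ∧
        ((z = y ∧ t = x) ∨ deg U t = 2))) := by
      intro y hxy hyp hx
      have hb := hbr x hxm y hxy
      have hsub := branch_subset hxy hyp hb
      refine ⟨hsub, ih x y hxy hx (fun v hv => hbr v (hsub hv)) (fun h => hab (hsub h)) ?_⟩
      have := Set.ncard_lt_ncard (hsub.ssubset_of_mem_notMem hxm (notMem_branch_of_isBridge hb))
      omega
    rcases Nat.lt_or_ge (deg U x) 2 with h2 | h2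
    · have h1 := deg_pos_of_adj hpx.symm
      exact Or.inr ⟨by omega, x, hxm, p, hpx.symm, by omega, Or.inl ⟨rfl, rfl⟩⟩
    obtain ⟨y, hxy, hyp⟩ := exists_other_neighbor (p := p) h2
    obtain ⟨hsub, h | ⟨_, z, hz, t, hzt, hzd, ht⟩⟩ := hstep y hxy hyp h2
    · exact Or.inl h
    rcases Nat.lt_or_ge (deg U x) 3 with h3 | h3
    · refine Or.inr ⟨by omega, z, hsub hz, t, hzt, hzd, Or.inr ?_⟩
      rcases ht with ⟨_, rfl⟩ | ht
      · omega
      · exact ht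
    · left
      obtain ⟨y₂, hxy₂, hy₂⟩ : ∃ y₂, U.Adj x y₂ ∧ y₂ ∉ ({p, y} : Set V) := by
        by_contra! hcon
        have : {v | U.Adj x v}.ncard ≤ ({p, y} : Set V).ncard :=
          Set.ncard_le_ncard hcon (Set.toFinite _)
        rw [Set.ncard_pair hyp.symm, ← deg_eq_ncard] at this
        omega
      simp only [Set.mem_insert_iff, Set.mem_singleton_iff, not_or] at hy₂
      exact improvable_of_fork hl hD hU ha hmax h3 (fun h => hab (h ▸ hxm)) hpx.symm hxy hxy₂ hyp
        hy₂.1 (Ne.symm hy₂.2) hp (hbr x hxm y hxy) hz (fun h => hab (h ▸ hsub hz)) hzd hzt ht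

/-- Let `a` have a neighbour `b` with an acyclic branch, both `b` and a further neighbour `c` not
being leaves. Either some fork in the branch gives an improvement, or `b` has degree two, its other
neighbour `y` has degree at most two, and some leaf `z` behind `b` has a neighbour of degree two;
then replacing the edges `ac`, `by` with `zc`, `ay` leaves `b` as a leaf at `a`, inserts the rest of
the branch into the edge `ac`, and decreases the index. -/
lemma improvable_of_acyclic_branch {l : ℝ} (hl : -1/2 ≤ l) {D : ℕ} (hD : 3 ≤ D)
    (hU : IsUnicyclic U) {a b c : V} (ha : deg U a = D) (hmax : ∀ v, deg U v ≤ D)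
    (hab : U.Adj a b) (hac : U.Adj a c) (hbc : b ≠ c) (hb2 : 2 ≤ deg U b) (hc2 : 2 ≤ deg U c)
    (hbr : ∀ v ∈ branch U a b, ∀ w, U.Adj v w → U.IsBridge s(v, w)) : Improvable l U D := by
  classical
  have hbm := self_mem_branch (G := U) a b
  have hbra : U.IsBridge s(a, b) := by
    rw [Sym2.eq_swap]; exact hbr b hbm a hab.symm
  have haB := notMem_branch_of_isBridge hbra
  obtain h | ⟨hb2', -⟩ := improvable_or_leaf hl hD hU ha hmax _ a b hab (by omega) hbr haB le_rfl
  · exact h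
  obtain ⟨y, hby, hya⟩ := exists_other_neighbor (p := a) hb2
  have hbry := hbr b hbm y hby
  have hsub := branch_subset hby hya hbry
  obtain h | ⟨hy2, z, hz, t, hzt, hzd, ht⟩ := improvable_or_leaf hl hD hU ha hmax _ b y hby hb2
    (fun v hv => hbr v (hsub hv)) (fun h => haB (hsub h)) le_rfl
  · exact h
  have hbd : deg U b = 2 := by omega
  have ht2 : deg U t = 2 := by
    rcases ht with ⟨_, rfl⟩ | ht
    · exact hbd
    · exact ht
  have hbY := notMem_branch_of_isBridge hbry
  have hzB := hsub hz
  have hyY := self_mem_branch (G := U) b y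
  have hyB := hsub hyY
  have haY : a ∉ branch U b y := fun h => haB (hsub h)
  have hcB : c ∉ branch U a b := neighbor_notMem_branch hac hbc hbra
  have hza : z ≠ a := by rintro rfl; exact haB hzB
  have hzb : z ≠ b := by rintro rfl; exact hbY hz
  have hzc : z ≠ c := by rintro rfl; exact hcB hzB
  have hyc : y ≠ c := by rintro rfl; exact hcB hyB
  have hnzc : ¬ U.Adj z c := not_adj_of_notMem_branch hzB hcB hac.ne'
  have hnza : ¬ U.Adj z a := not_adj_of_notMem_branch hz haY hab.ne
  have hnya : ¬ U.Adj y a := not_adj_of_notMem_branch hyY haY hab.ne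
  -- First replace `ac` by `zc`.
  have hr1 : (U.deleteEdges {s(a, c)}).Reachable a z := by
    refine Reachable.trans (Adj.reachable ?_) (branch_reach hzB haB c)
    rw [deleteEdges_adj]
    refine ⟨hab, ?_⟩
    rw [Set.mem_singleton_iff, Sym2.eq_iff]
    rintro (⟨_, h⟩ | ⟨h, _⟩)
    · exact hbc h
    · exact hac.ne h
  set U₁ := swapEdge U a c z with hU₁
  have hU1 : IsUnicyclic U₁ := swapEdge_isUnicyclic hU hac hzc hnzc hr1
  have hadj1 : ∀ u v, u ≠ c → v ≠ c → (U₁.Adj u v ↔ U.Adj u v) := by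
    intro u v hu hv
    simp only [hU₁, swapEdge, sup_adj, deleteEdges_adj, edge_adj, Set.mem_singleton_iff, Sym2.eq_iff]
    tauto
  -- Then replace `by` by `ay`.
  have hby1 : U₁.Adj b y := (hadj1 b y hbc hyc).2 hby
  have hab1 : U₁.Adj a b := (hadj1 a b hac.ne hbc).2 hab
  have hnay1 : ¬ U₁.Adj a y := fun h => hnya ((hadj1 a y hac.ne hyc).1 h).symm
  have hr2 : (U₁.deleteEdges {s(b, y)}).Reachable b a := by
    refine Adj.reachable ?_
    rw [deleteEdges_adj]
    refine ⟨hab1.symm, ?_⟩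
    rw [Set.mem_singleton_iff, Sym2.eq_iff]
    rintro (⟨_, h⟩ | ⟨h, _⟩)
    · exact hya h.symm
    · exact hby.ne h
  have hd1 := deg_swapEdge hac hzc hnzc
  have hd2 := deg_swapEdge hby1 hya.symm hnay1
  rw [← hU₁] at hd1
  have hD' : (3 : ℝ) ≤ D := by exact_mod_cast hD
  refine ⟨swapEdge U₁ b y a, swapEdge_isUnicyclic hU1 hby1 hya.symm hnay1 hr2,
    maxDeg_eq_iff _ a ?_ ?_, ?_⟩
  · have h := hd2 a
    rw [hd1 a, if_pos rfl, if_neg hza.symm, if_neg hab.ne, ha] at h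
    have h' : (deg (swapEdge U₁ b y a) a : ℝ) = D := by linarith
    exact_mod_cast h'
  · intro v
    suffices (deg (swapEdge U₁ b y a) v : ℝ) ≤ D by exact_mod_cast this
    rw [hd2, hd1]
    have hv : (deg U v : ℝ) ≤ D := by exact_mod_cast hmax v
    by_cases hvz : v = z
    · subst hvz
      rw [hzd, if_neg hza, if_neg hzb]
      norm_num
      linarith
    · rw [if_neg hvz]
      by_cases hva : v = a
      · rw [if_pos hva]; split_ifs <;> linarith
      · rw [if_neg hva]; split_ifs <;> linarith
  · have e1 := GRM_swapEdge l hac hzc hnzc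
    have e2 := GRM_swapEdge l hby1 hya.symm hnay1
    have s1 := nbrSum_swapEdge l hac hzc hnzc (u := a) hac.ne hza.symm
    have s2 := nbrSum_swapEdge l hac hzc hnzc (u := b) hbc hzb.symm
    rw [← hU₁] at e1 s1 s2
    rw [nbrSum_of_deg_one l hzd hzt, adjInd_of_not_adj (fun h => hnza h.symm), ht2, hzd, ha] at e1
    rw [if_pos rfl, adjInd_self, adjInd_of_not_adj (fun h => hnza h.symm)] at s1
    rw [if_neg hab.ne', nbrSum_of_deg_two l hya.symm hbd hab.symm hby, adjInd_of_adj hab.symm,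
      ha] at s2
    rw [adjInd_of_adj hab1.symm, s1, s2, hd1 a, hd1 b, hd1 y, if_pos rfl, if_neg hza.symm,
      if_neg hab.ne', if_neg hzb.symm, if_neg hya, ha, hbd, e1] at e2
    rw [e2]
    have hc' : (2 : ℝ) ≤ deg U c := by exact_mod_cast hc2
    have hy' : (deg U y : ℝ) ≤ 2 := by exact_mod_cast hy2
    have m1 : 0 ≤ ((D : ℝ) - 2) * ((deg U c : ℝ) - 2) :=
      mul_nonneg (by linarith) (by linarith)
    have m2 : 0 ≤ ((D : ℝ) - 2) * (2 - (deg U y : ℝ)) :=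
      mul_nonneg (by linarith) (by linarith)
    push_cast
    -- In both cases `y` has degree at most two after the first swap, and the index drops by at
    -- least `(Δ - 2) * (deg c - 2) + (Δ - 2)`.
    by_cases hyz : y = z
    · subst hyz
      rw [if_pos rfl, adjInd_of_adj hby, hzd]
      push_cast
      nlinarith
    · rw [if_neg hyz, adjInd_of_not_adj (fun h => neighbor_notMem_branch h hyz hbry hz)]
      nlinarith

end Reduce

/-! ### Conclusion -/

theorem stmt10 {V : Type*} [Fintype V] (l : ℝ) (hl : -1/2 ≤ l)
    (n Δ : ℕ) (hΔ3 : 3 ≤ Δ) (U : SimpleGraph V) (hU : IsUnicyclic U)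
    (hcard : Fintype.card V = n) (hmax : maxDeg U = Δ)
    (a : V) (ha : deg U a = Δ) (hacyc : ¬ OnCycle U a)
    (hnbrs : 2 ≤ {v : V | U.Adj a v ∧ 1 < deg U v}.ncard) :
    ∃ U' : SimpleGraph V, IsUnicyclic U' ∧ maxDeg U' = Δ ∧
      GRM l U' < GRM l U := by
  have hmaxle : ∀ v, deg U v ≤ Δ := fun v => hmax ▸ deg_le_maxDeg U v
  obtain ⟨b, ⟨hab, hb⟩, c, ⟨hac, hc⟩, hbc⟩ := (Set.one_lt_ncard (Set.toFinite _)).1 hnbrs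
  rcases exists_acyclic_branch hU hab hac hbc hacyc with h | h
  · exact improvable_of_acyclic_branch hl hΔ3 hU ha hmaxle hab hac hbc hb hc h
  · exact improvable_of_acyclic_branch hl hΔ3 hU ha hmaxle hac hab hbc.symm hc hb h
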